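/- Σ_{k=1}^∞ λ(2k)/((2k+2)·2^{2k}) = -(log 2)/4 + 2G/π - 7ζ_E(3)/(2π²), where λ(s) = Σ_{m=0}^∞ 1/(2m+1)^s, G is Catalan's constant, and ζ_E(3) = Σ_{n=1}^∞ (-1)^{n+1}/n³. -/

import Mathlib

open Real

noncomputable def dirichletLambda (s : ℕ) : ℝ := ∑' m : ℕ, 1 / (2 * (m : ℝ) + 1) ^ s

/-!
For `|x| < 1` the partial fraction expansion of the tangent gives
`∑ λ(2k) x^(2k-1) = π/4 * tan (π x / 2)`. Multiplying by `x²` and integrating over `[0, 1/2]`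
turns the series into `8/π² * ∫ y² tan y` over `[0, π/4]`. This integral is evaluated with
the formal Fourier series `tan y = 2 ∑ (-1)^n sin (2(n+1)y)`: the series diverges, but the remainder
of its `N`-th partial sum is `± sin ((2N+1)y) / cos y`, whose integral tends to zero by the
Riemann–Lebesgue lemma. The elementary integrals `∫ y² sin (2(n+1)y)` over `[0, π/4]` then
contribute Catalan's constant for even `n`, `log 2` for odd `n`, and inverse cubes for all `n`.
-/

open Filter Finset MeasureTheory Topology
open Complex (I)

/-- The Dirichlet beta function at a natural number; `dirichletBeta 2` is Catalan's constant. -/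
noncomputable def dirichletBeta (s : ℕ) : ℝ := ∑' n : ℕ, (-1 : ℝ) ^ n / (2 * (n : ℝ) + 1) ^ s

/-- The Dirichlet eta function (alternating zeta function) `ζ_E` at a natural number, with the
summation index shifted to start from zero. -/
noncomputable def dirichletEta (s : ℕ) : ℝ := ∑' n : ℕ, (-1 : ℝ) ^ n / ((n : ℝ) + 1) ^ s

section DirichletSeries

variable {s : ℕ}

lemma summable_one_div_odd_pow (hs : 1 < s) :
    Summable fun m : ℕ => 1 / (2 * (m : ℝ) + 1) ^ s := by
  have hinj : Function.Injective fun m : ℕ => 2 * m + 1 := fun a b h => by simpa using h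
  simpa [Function.comp_def] using (summable_one_div_nat_pow.mpr hs).comp_injective hinj

lemma hasSum_dirichletLambda (hs : 1 < s) :
    HasSum (fun m : ℕ => 1 / (2 * (m : ℝ) + 1) ^ s) (dirichletLambda s) :=
  (summable_one_div_odd_pow hs).hasSum

lemma hasSum_dirichletBeta (hs : 1 < s) :
    HasSum (fun n : ℕ => (-1 : ℝ) ^ n / (2 * (n : ℝ) + 1) ^ s) (dirichletBeta s) := by
  have h := (summable_one_div_odd_pow hs).alternating
  simp only [mul_one_div] at h
  exact h.hasSum

lemma hasSum_dirichletEta (hs : 1 < s) :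
    HasSum (fun n : ℕ => (-1 : ℝ) ^ n / ((n : ℝ) + 1) ^ s) (dirichletEta s) := by
  have h := ((summable_nat_add_iff 1).mpr (summable_one_div_nat_pow.mpr hs)).alternating
  simp only [mul_one_div, Nat.cast_add, Nat.cast_one] at h
  exact h.hasSum

lemma dirichletLambda_nonneg (s : ℕ) : 0 ≤ dirichletLambda s :=
  tsum_nonneg fun m => by positivity

theorem tendsto_alternating_harmonic_log_two :
    Tendsto (fun n : ℕ => ∑ i ∈ range n, (-1 : ℝ) ^ i / ((i : ℝ) + 1)) atTop (𝓝 (log 2)) := by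
  obtain ⟨l, hl⟩ : ∃ l, Tendsto (fun n : ℕ => ∑ i ∈ range n, (-1 : ℝ) ^ i / ((i : ℝ) + 1))
      atTop (𝓝 l) := by
    simpa only [mul_one_div] using Antitone.tendsto_alternating_series_of_tendsto_zero
      (fun _ _ h => by gcongr) tendsto_one_div_add_atTop_nhds_zero_nat
  have hid : Tendsto (fun x : ℝ => x) (𝓝[<] 1) (𝓝 1) := tendsto_id.mono_left nhdsWithin_le_nhds
  have habel := (tendsto_tsum_powerSeries_nhdsWithin_lt hl).mul hid
  rw [mul_one] at habel
  have hlog : Tendsto (fun x : ℝ => log (1 + x)) (𝓝[<] 1) (𝓝 (log 2)) := by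
    have := (hid.const_add 1).log (by norm_num)
    rwa [one_add_one_eq_two] at this
  have heq : ∀ᶠ x : ℝ in 𝓝[<] 1,
      (∑' n : ℕ, (-1 : ℝ) ^ n / ((n : ℝ) + 1) * x ^ n) * x = log (1 + x) := by
    filter_upwards [Ioo_mem_nhdsLT (show (-1 : ℝ) < 1 by norm_num)] with x hx
    have h := (hasSum_pow_div_log_of_abs_lt_one (x := -x) (by rwa [abs_neg, abs_lt])).neg
    rw [neg_neg, sub_neg_eq_add] at h
    rw [← tsum_mul_right, ← h.tsum_eq]
    refine tsum_congr fun n => ?_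
    rw [neg_pow x (n + 1)]
    ring
  rwa [tendsto_nhds_unique (habel.congr' heq) hlog] at hl

end DirichletSeries

section TangentSeries

lemma summable_tan_partialFractions (z : ℂ) :
    Summable fun m : ℕ => 4 * z / ((2 * m + 1) ^ 2 - z ^ 2) := by
  have hinj : Function.Injective fun m : ℕ => (2 * m + 1 : ℤ) := fun a b h => by simpa using h
  refine (((EisensteinSeries.summable_linear_sub_mul_linear_add z 1 1).comp_injective
    hinj).mul_left (-4 * z)).congr fun m => ?_
  have hfactor : (2 * (m : ℂ) + 1) ^ 2 - z ^ 2
      = -((z - (2 * m + 1)) * (z + (2 * m + 1))) := by ring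
  rw [hfactor, div_neg, ← neg_div, ← neg_mul, div_eq_mul_inv]
  simp

lemma sum_range_tan_partialFractions {w : ℂ} (hw : w ∈ Complex.integerComplement) (n : ℕ) :
    ∑ m ∈ range n, 4 * (1 - 2 * w) / ((2 * m + 1) ^ 2 - (1 - 2 * w) ^ 2)
      = ∑ m ∈ range n, cotTerm w m + (1 / w - 1 / (w + n)) := by
  have hterm (m : ℕ) : 4 * (1 - 2 * w) / ((2 * m + 1) ^ 2 - (1 - 2 * w) ^ 2)
      = cotTerm w m + (1 / (w + m) - 1 / (w + (m + 1 : ℕ))) := by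
    have hadd : w + m ≠ 0 := by exact_mod_cast Complex.integerComplement_add_ne_zero hw m
    have hsub : w - (m + 1) ≠ 0 := by
      simpa [sub_eq_add_neg] using Complex.integerComplement_add_ne_zero hw (-(m + 1))
    have hfactor : (2 * (m : ℂ) + 1) ^ 2 - (1 - 2 * w) ^ 2
        = -(4 * ((w + m) * (w - (m + 1)))) := by ring
    rw [hfactor, cotTerm]
    push_cast
    field_simp
    ring
  rw [sum_congr rfl fun m _ => hterm m, sum_add_distrib, sum_range_sub', Nat.cast_zero, add_zero]

/-- Since `tan (π z / 2) = cot (π w)` with `w = (1 - z) / 2`, this is the expansion of the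
cotangent with its terms regrouped. -/
theorem hasSum_pi_mul_tan {z : ℂ} (hz : ∀ n : ℤ, z ≠ 2 * n + 1) :
    HasSum (fun m : ℕ => 4 * z / ((2 * m + 1) ^ 2 - z ^ 2)) (π * Complex.tan (π * z / 2)) := by
  obtain ⟨w, rfl⟩ : ∃ w, z = 1 - 2 * w := ⟨(1 - z) / 2, by ring⟩
  have hw : w ∈ Complex.integerComplement := by
    rintro ⟨n, rfl⟩
    refine hz (-n) ?_
    push_cast
    ring
  have hcot : Complex.cot (π * w) = Complex.tan (π * (1 - 2 * w) / 2) := by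
    have hangle : π * (1 - 2 * w) / 2 = π / 2 - π * w := by ring
    rw [Complex.cot, Complex.tan, hangle, Complex.cos_pi_div_two_sub, Complex.sin_pi_div_two_sub]
  have hboundary : Tendsto (fun n : ℕ => 1 / (w + n)) atTop (𝓝 0) := by
    simp_rw [one_div]
    exact tendsto_inv₀_cobounded.comp
      ((tendsto_const_add_cobounded w).comp tendsto_natCast_atTop_cobounded)
  have hlimit := (tendsto_logDeriv_euler_cot_sub hw).add (hboundary.const_sub (1 / w))
  rw [hcot, sub_zero, sub_add_cancel] at hlimit
  exact (summable_tan_partialFractions _).hasSum_iff_tendsto_nat.mpr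
    (hlimit.congr fun n => (sum_range_tan_partialFractions hw n).symm)

lemma norm_two_mul_natCast_add_one (m : ℕ) : ‖2 * (m : ℂ) + 1‖ = 2 * m + 1 := by
  exact_mod_cast Complex.norm_natCast (2 * m + 1)

lemma hasSum_one_div_pow_mul_pow {𝕜 : Type*} [NormedField 𝕜] {c z : 𝕜} (h : ‖z‖ < ‖c‖) :
    HasSum (fun k : ℕ => 1 / c ^ (2 * (k + 1)) * z ^ (2 * k + 1)) (z / (c ^ 2 - z ^ 2)) := by
  have hc : c ≠ 0 := norm_pos_iff.mp ((norm_nonneg z).trans_lt h)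
  have hratio : ‖(z / c) ^ 2‖ < 1 := by
    rw [norm_pow, norm_div]
    exact pow_lt_one₀ (by positivity) ((div_lt_one (norm_pos_iff.mpr hc)).mpr h) two_ne_zero
  have hval : z / (c ^ 2 - z ^ 2) = z / c ^ 2 * (1 - (z / c) ^ 2)⁻¹ := by
    rw [← div_eq_mul_inv, div_div, mul_sub, mul_one, div_pow, mul_div_cancel₀ _ (pow_ne_zero 2 hc)]
  rw [hval]
  refine ((hasSum_geometric_of_norm_lt_one hratio).mul_left (z / c ^ 2)).congr_fun fun k => ?_
  rw [← pow_mul, div_pow]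
  field_simp
  ring

lemma summable_one_div_odd_pow_mul_pow {z : ℂ} (hz : ‖z‖ < 1) :
    Summable fun q : ℕ × ℕ => 1 / (2 * (q.1 : ℂ) + 1) ^ (2 * (q.2 + 1)) * z ^ (2 * q.2 + 1) := by
  have hprod : Summable fun q : ℕ × ℕ => 1 / (2 * (q.1 : ℝ) + 1) ^ 2 * ‖z‖ ^ q.2 :=
    (summable_one_div_odd_pow one_lt_two).mul_of_nonneg
      (summable_geometric_of_lt_one (norm_nonneg z) hz)
      (fun _ => by positivity) (fun _ => by positivity)
  refine .of_norm_bounded hprod fun q => ?_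
  rw [norm_mul, norm_div, norm_one, norm_pow, norm_pow, norm_two_mul_natCast_add_one]
  have hodd : (1 : ℝ) ≤ 2 * q.1 + 1 := by linarith [q.1.cast_nonneg (α := ℝ)]
  gcongr ?_ * ?_
  · gcongr
    omega
  · exact pow_le_pow_of_le_one (norm_nonneg z) hz.le (by omega)

theorem hasSum_dirichletLambda_mul_pow {z : ℂ} (hz : ‖z‖ < 1) :
    HasSum (fun k : ℕ => (dirichletLambda (2 * (k + 1)) : ℂ) * z ^ (2 * k + 1))
      (π / 4 * Complex.tan (π * z / 2)) := by
  have hodd : ∀ n : ℤ, z ≠ 2 * n + 1 := by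
    rintro n rfl
    have hlt : |2 * n + 1| < 1 := by exact_mod_cast hz
    rw [Int.abs_lt_one_iff] at hlt
    omega
  have hrow (m : ℕ) : HasSum (fun k : ℕ => 1 / (2 * (m : ℂ) + 1) ^ (2 * (k + 1)) * z ^ (2 * k + 1))
      (1 / 4 * (4 * z / ((2 * m + 1) ^ 2 - z ^ 2))) := by
    have hlt : ‖z‖ < ‖2 * (m : ℂ) + 1‖ := by
      rw [norm_two_mul_natCast_add_one]
      exact hz.trans_le (by linarith [m.cast_nonneg (α := ℝ)])
    have hval : 1 / 4 * (4 * z / ((2 * m + 1) ^ 2 - z ^ 2)) = z / ((2 * m + 1) ^ 2 - z ^ 2) := by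
      ring
    rw [hval]
    exact hasSum_one_div_pow_mul_pow hlt
  have hsummable := summable_one_div_odd_pow_mul_pow hz
  have hcolumn (k : ℕ) : HasSum
      (fun m : ℕ => 1 / (2 * (m : ℂ) + 1) ^ (2 * (k + 1)) * z ^ (2 * k + 1))
      (dirichletLambda (2 * (k + 1)) * z ^ (2 * k + 1)) := by
    have h := (hasSum_dirichletLambda (s := 2 * (k + 1)) (by omega)).mapL Complex.ofRealCLM
    simpa using h.mul_right (z ^ (2 * k + 1))
  have htotal := (hsummable.hasSum.prod_fiberwise hrow).unique
    ((hasSum_pi_mul_tan hodd).mul_left (1 / 4))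
  have hswap := (Equiv.prodComm ℕ ℕ).hasSum_iff.mpr hsummable.hasSum
  rw [htotal, ← mul_assoc, one_div_mul_eq_div] at hswap
  exact hswap.prod_fiberwise hcolumn

theorem hasSum_dirichletLambda_mul_pow_real {x : ℝ} (hx : |x| < 1) :
    HasSum (fun k : ℕ => dirichletLambda (2 * (k + 1)) * x ^ (2 * k + 1))
      (π / 4 * tan (π * x / 2)) := by
  have h := hasSum_dirichletLambda_mul_pow (z := x) (by simpa using hx)
  exact_mod_cast h

theorem hasSum_dirichletLambda_mul_pow_div {x : ℝ} (hx : |x| < 1) (p : ℕ) :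
    HasSum (fun k : ℕ => dirichletLambda (2 * (k + 1)) * x ^ (2 * k + p + 2) / (2 * k + p + 2))
      (∫ t in 0..x, π / 4 * t ^ p * tan (π * t / 2)) := by
  have hle (t : ℝ) (ht : t ∈ Set.uIoc 0 x) : |t| ≤ |x| := by
    simpa using Set.abs_sub_left_of_mem_uIcc (Set.uIoc_subset_uIcc ht)
  have hbound (k : ℕ) (t : ℝ) (ht : t ∈ Set.uIoc 0 x) :
      ‖dirichletLambda (2 * (k + 1)) * t ^ (2 * k + 1) * t ^ p‖
        ≤ dirichletLambda (2 * (k + 1)) * |x| ^ (2 * k + 1) * |x| ^ p := by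
    have htx := hle t ht
    have hnonneg := dirichletLambda_nonneg (2 * (k + 1))
    rw [norm_mul, norm_mul, norm_pow, norm_pow, norm_of_nonneg hnonneg, norm_eq_abs]
    gcongr
  have hsummable : Summable fun k : ℕ =>
      dirichletLambda (2 * (k + 1)) * |x| ^ (2 * k + 1) * |x| ^ p :=
    (hasSum_dirichletLambda_mul_pow_real (x := |x|) (by rwa [abs_abs])).summable.mul_right _
  have hseries (t : ℝ) (ht : t ∈ Set.uIoc 0 x) :
      HasSum (fun k : ℕ => dirichletLambda (2 * (k + 1)) * t ^ (2 * k + 1) * t ^ p)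
        (π / 4 * t ^ p * tan (π * t / 2)) := by
    rw [mul_right_comm]
    exact (hasSum_dirichletLambda_mul_pow_real ((hle t ht).trans_lt hx)).mul_right (t ^ p)
  have h := intervalIntegral.hasSum_integral_of_dominated_convergence (μ := volume)
    (fun k _ => dirichletLambda (2 * (k + 1)) * |x| ^ (2 * k + 1) * |x| ^ p)
    (fun k => Continuous.aestronglyMeasurable (by fun_prop))
    (fun k => .of_forall (hbound k)) (.of_forall fun _ _ => hsummable)
    intervalIntegrable_const (.of_forall hseries)
  refine h.congr_fun fun k => ?_
  simp_rw [mul_assoc, ← pow_add]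
  rw [intervalIntegral.integral_const_mul, integral_pow, zero_pow (by omega), sub_zero]
  push_cast
  ring

lemma integral_pow_mul_tan_pi_mul_div_two (x : ℝ) (p : ℕ) :
    ∫ t in 0..x, π / 4 * t ^ p * tan (π * t / 2)
      = 1 / 2 * (2 / π) ^ p * ∫ y in 0..(π * x / 2), y ^ p * tan y := by
  have hintegrand (t : ℝ) : π / 4 * t ^ p * tan (π * t / 2)
      = π / 4 * (2 / π) ^ p * ((π / 2 * t) ^ p * tan (π / 2 * t)) := by
    rw [mul_pow, div_pow, div_pow, mul_div_right_comm π t 2]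
    field_simp
  simp_rw [hintegrand]
  rw [intervalIntegral.integral_const_mul,
    intervalIntegral.integral_comp_mul_left (fun y => y ^ p * tan y) (by positivity),
    mul_zero, mul_div_right_comm π x 2, smul_eq_mul]
  field_simp
  ring

end TangentSeries

section FourierSeries

variable {a b : ℝ}

theorem tendsto_intervalIntegral_exp_smul {E : Type*} [NormedAddCommGroup E] [NormedSpace ℂ E]
    (u : ℝ → E) (a b : ℝ) :
    Tendsto (fun w : ℝ => ∫ x in a..b, Complex.exp ((w * x : ℝ) * I) • u x) (cocompact ℝ)
      (𝓝 0) := by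
  wlog hab : a ≤ b generalizing a b
  · simp_rw [intervalIntegral.integral_symm b a]
    simpa using (this b a (le_of_not_ge hab)).neg
  have hc : -(2 * π)⁻¹ ≠ 0 := by simp [pi_ne_zero]
  have hscale : Tendsto (fun w : ℝ => w * -(2 * π)⁻¹) (cocompact ℝ) (cocompact ℝ) :=
    (Homeomorph.mulRight₀ _ hc).isClosedEmbedding.tendsto_cocompact
  refine ((Real.tendsto_integral_exp_smul_cocompact
    ((Set.Ioc a b).indicator u)).comp hscale).congr fun w => ?_
  rw [intervalIntegral.integral_of_le hab, ← integral_indicator measurableSet_Ioc]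
  refine integral_congr_ae (.of_forall fun x => ?_)
  have hphase : 2 * π * -(x * (w * -(2 * π)⁻¹)) = w * x := by field_simp
  simp only [Set.indicator_smul_apply, Circle.smul_def, Real.fourierChar_apply, hphase]

theorem tendsto_intervalIntegral_mul_sin {u : ℝ → ℝ} (hu : IntervalIntegrable u volume a b) :
    Tendsto (fun w : ℝ => ∫ x in a..b, u x * sin (w * x)) (cocompact ℝ) (𝓝 0) := by
  have him (w : ℝ) : (∫ x in a..b, Complex.exp ((w * x : ℝ) * I) • (u x : ℂ)).im
      = ∫ x in a..b, u x * sin (w * x) := by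
    have hint : IntervalIntegrable (fun x => Complex.exp ((w * x : ℝ) * I) • (u x : ℂ))
        volume a b :=
      IntervalIntegrable.continuousOn_mul ⟨hu.1.ofReal, hu.2.ofReal⟩ (by fun_prop)
    rw [← Complex.imCLM_apply, ← Complex.imCLM.intervalIntegral_comp_comm hint]
    refine intervalIntegral.integral_congr fun x _ => ?_
    rw [Complex.imCLM_apply, smul_eq_mul, Complex.im_mul_ofReal, Complex.exp_ofReal_mul_I_im,
      mul_comm]
  have h := (Complex.continuous_im.tendsto 0).comp
    (tendsto_intervalIntegral_exp_smul (fun x => (u x : ℂ)) a b)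
  simpa only [Function.comp_def, him, Complex.zero_im] using h

lemma cos_mul_sum_alternating_sin (θ : ℝ) (N : ℕ) :
    cos θ * ∑ n ∈ range N, (-1) ^ n * (2 * sin (2 * (n + 1) * θ))
      = sin θ - (-1) ^ N * sin ((2 * N + 1) * θ) := by
  induction N with
  | zero => simp
  | succ N ih =>
    have hsub : (2 * (N : ℝ) + 1) * θ = 2 * (N + 1) * θ - θ := by ring
    have hadd : (2 * ((N + 1 : ℕ) : ℝ) + 1) * θ = 2 * (N + 1) * θ + θ := by push_cast; ring
    rw [sum_range_succ, mul_add, ih, hsub, hadd, sin_add, sin_sub, pow_succ]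
    ring

lemma sum_alternating_integral_mul_sin {u : ℝ → ℝ} (hu : IntervalIntegrable u volume a b)
    (hcos : ∀ x ∈ Set.uIcc a b, cos x ≠ 0) (N : ℕ) :
    ∑ n ∈ range N, (-1) ^ n * (2 * ∫ x in a..b, u x * sin (2 * (n + 1) * x))
      = (∫ x in a..b, u x * tan x)
        - (-1) ^ N * ∫ x in a..b, u x * (cos x)⁻¹ * sin ((2 * N + 1) * x) := by
  have hterm (n : ℕ) : IntervalIntegrable
      (fun x => (-1) ^ n * (2 * (u x * sin (2 * (n + 1) * x)))) volume a b :=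
    ((hu.mul_continuousOn (by fun_prop)).const_mul 2).const_mul _
  have htan : IntervalIntegrable (fun x => u x * tan x) volume a b :=
    hu.mul_continuousOn fun x hx => (continuousAt_tan.mpr (hcos x hx)).continuousWithinAt
  have hremainder : IntervalIntegrable
      (fun x => (-1) ^ N * (u x * (cos x)⁻¹ * sin ((2 * N + 1) * x))) volume a b :=
    ((hu.mul_continuousOn (continuousOn_cos.inv₀ hcos)).mul_continuousOn (by fun_prop)).const_mul _
  simp_rw [← intervalIntegral.integral_const_mul]
  rw [← intervalIntegral.integral_finsetSum fun n _ => hterm n,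
    ← intervalIntegral.integral_sub htan hremainder]
  refine intervalIntegral.integral_congr fun x hx => ?_
  calc ∑ n ∈ range N, (-1) ^ n * (2 * (u x * sin (2 * (n + 1) * x)))
      = u x * ∑ n ∈ range N, (-1) ^ n * (2 * sin (2 * (n + 1) * x)) := by
        rw [mul_sum]
        exact sum_congr rfl fun n _ => by ring
    _ = u x * ((sin x - (-1) ^ N * sin ((2 * N + 1) * x)) / cos x) := by
        rw [← cos_mul_sum_alternating_sin, mul_div_cancel_left₀ _ (hcos x hx)]
    _ = u x * tan x - (-1) ^ N * (u x * (cos x)⁻¹ * sin ((2 * N + 1) * x)) := by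
        rw [tan_eq_sin_div_cos]
        ring

theorem tendsto_sum_alternating_integral_mul_sin {u : ℝ → ℝ}
    (hu : IntervalIntegrable u volume a b) (hcos : ∀ x ∈ Set.uIcc a b, cos x ≠ 0) :
    Tendsto (fun N : ℕ =>
      ∑ n ∈ range N, (-1) ^ n * (2 * ∫ x in a..b, u x * sin (2 * (n + 1) * x)))
      atTop (𝓝 (∫ x in a..b, u x * tan x)) := by
  have hfreq : Tendsto (fun N : ℕ => 2 * (N : ℝ) + 1) atTop (cocompact ℝ) :=
    (tendsto_atTop_add_const_right _ _
      (tendsto_natCast_atTop_atTop.const_mul_atTop two_pos)).mono_right atTop_le_cocompact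
  have hremainder : Tendsto (fun N : ℕ => (-1 : ℝ) ^ N *
      ∫ x in a..b, u x * (cos x)⁻¹ * sin ((2 * N + 1) * x)) atTop (𝓝 0) := by
    have h := (tendsto_intervalIntegral_mul_sin
      (hu.mul_continuousOn (continuousOn_cos.inv₀ hcos))).comp hfreq
    refine squeeze_zero_norm (fun N => ?_) (tendsto_zero_iff_norm_tendsto_zero.mp h)
    simp
  simp_rw [sum_alternating_integral_mul_sin hu hcos]
  simpa using hremainder.const_sub (∫ x in a..b, u x * tan x)

end FourierSeries

section IntegralSqMulTan

lemma integral_sq_mul_sin {c : ℝ} (hc : c ≠ 0) (b : ℝ) :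
    ∫ x in 0..b, x ^ 2 * sin (c * x) =
      -(b ^ 2 * cos (c * b)) / c + 2 * b * sin (c * b) / c ^ 2
        + 2 * (cos (c * b) - 1) / c ^ 3 := by
  have hderiv (x : ℝ) : HasDerivAt
      (fun x => -(x ^ 2 * cos (c * x)) / c + 2 * x * sin (c * x) / c ^ 2
        + 2 * (cos (c * x) - 1) / c ^ 3) (x ^ 2 * sin (c * x)) x := by
    have hlin : HasDerivAt (fun x => c * x) c x := hasDerivAt_const_mul c
    have hfirst := ((hasDerivAt_pow 2 x).mul hlin.cos).neg.div_const c
    have hsecond := (((hasDerivAt_id x).const_mul 2).mul hlin.sin).div_const (c ^ 2)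
    have hthird := ((hlin.cos.sub_const 1).const_mul 2).div_const (c ^ 3)
    convert! (hfirst.add hsecond).add hthird using 1
    simp only [id]
    field_simp
    ring
  rw [intervalIntegral.integral_eq_sub_of_hasDerivAt (fun x _ => hderiv x)
    (Continuous.intervalIntegrable (by fun_prop) _ _)]
  simp

lemma integral_sq_mul_sin_odd (i : ℕ) :
    ∫ x in 0..(π / 4), x ^ 2 * sin (2 * (2 * i + 1) * x)
      = π / 8 * ((-1) ^ i / (2 * (i : ℝ) + 1) ^ 2) - 1 / 4 * (1 / (2 * (i : ℝ) + 1) ^ 3) := by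
  have hangle : 2 * (2 * (i : ℝ) + 1) * (π / 4) = i * π + π / 2 := by ring
  rw [integral_sq_mul_sin (by positivity), hangle, cos_add_pi_div_two, sin_add_pi_div_two,
    sin_nat_mul_pi, cos_nat_mul_pi]
  field_simp
  ring

lemma integral_sq_mul_sin_even (i : ℕ) :
    ∫ x in 0..(π / 4), x ^ 2 * sin (2 * (2 * i + 2) * x)
      = π ^ 2 / 64 * ((-1) ^ i / ((i : ℝ) + 1)) - 1 / 32 * ((-1) ^ i / ((i : ℝ) + 1) ^ 3)
        - 1 / 4 * (1 / (2 * (i : ℝ) + 2) ^ 3) := by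
  have hangle : 2 * (2 * (i : ℝ) + 2) * (π / 4) = (i + 1 : ℕ) * π := by push_cast; ring
  rw [integral_sq_mul_sin (by positivity), hangle, cos_nat_mul_pi, sin_nat_mul_pi]
  have hfactor : 2 * (2 * (i : ℝ) + 2) = 4 * (i + 1) := by ring
  rw [hfactor]
  field_simp
  ring

lemma sum_range_two_mul {M : Type*} [AddCommMonoid M] (f : ℕ → M) (n : ℕ) :
    ∑ i ∈ range (2 * n), f i = ∑ i ∈ range n, (f (2 * i) + f (2 * i + 1)) := by
  induction n with
  | zero => simp
  | succ n ih => rw [mul_add_one, sum_range_succ, sum_range_succ, sum_range_succ, ih, add_assoc]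

lemma sum_alternating_integral_sq_mul_sin (M : ℕ) :
    ∑ n ∈ range (2 * M), (-1) ^ n * (2 * ∫ x in 0..(π / 4), x ^ 2 * sin (2 * (n + 1) * x))
      = π / 4 * ∑ i ∈ range M, (-1) ^ i / (2 * (i : ℝ) + 1) ^ 2
        - π ^ 2 / 32 * ∑ i ∈ range M, (-1) ^ i / ((i : ℝ) + 1)
        + 1 / 16 * ∑ i ∈ range M, (-1) ^ i / ((i : ℝ) + 1) ^ 3
        - 1 / 2 * ∑ n ∈ range (2 * M), (-1) ^ n / ((n : ℝ) + 1) ^ 3 := by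
  simp_rw [sum_range_two_mul, mul_sum]
  rw [← sum_sub_distrib, ← sum_add_distrib, ← sum_sub_distrib]
  refine sum_congr rfl fun i _ => ?_
  have hodd := integral_sq_mul_sin_odd i
  have heven := integral_sq_mul_sin_even i
  have hsign : (-1 : ℝ) ^ (2 * i) = 1 := by rw [pow_mul]; norm_num
  push_cast
  rw [add_assoc (2 * (i : ℝ)), one_add_one_eq_two, hodd, heven, pow_succ _ (2 * i), hsign]
  ring

theorem integral_sq_mul_tan :
    ∫ x in 0..(π / 4), x ^ 2 * tan x =
      π / 4 * dirichletBeta 2 - π ^ 2 / 32 * log 2 - 7 / 16 * dirichletEta 3 := by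
  have hcos : ∀ x ∈ Set.uIcc 0 (π / 4), cos x ≠ 0 := by
    intro x hx
    rw [Set.uIcc_of_le (by positivity)] at hx
    exact (cos_pos_of_mem_Ioo ⟨by linarith [hx.1, pi_pos], by linarith [hx.2, pi_pos]⟩).ne'
  have hdouble : Tendsto (fun M : ℕ => 2 * M) atTop atTop := tendsto_id.const_mul_atTop' two_pos
  have hintegral := (tendsto_sum_alternating_integral_mul_sin
    ((continuous_pow 2).intervalIntegrable 0 (π / 4)) hcos).comp hdouble
  have hbeta := (hasSum_dirichletBeta one_lt_two).tendsto_sum_nat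
  have heta := (hasSum_dirichletEta (s := 3) (by norm_num)).tendsto_sum_nat
  have hsum := (((hbeta.const_mul (π / 4)).sub
    (tendsto_alternating_harmonic_log_two.const_mul (π ^ 2 / 32))).add
    (heta.const_mul (1 / 16))).sub ((heta.comp hdouble).const_mul (1 / 2))
  have hlimit := tendsto_nhds_unique hintegral
    (hsum.congr fun M => (sum_alternating_integral_sq_mul_sin M).symm)
  linear_combination hlimit

end IntegralSqMulTan

theorem lambda_series_two :
    ∑' k : ℕ, dirichletLambda (2 * (k + 1)) / ((2 * ((k : ℝ) + 1) + 2) * 2 ^ (2 * (k + 1)))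
      = -(Real.log 2) / 4 + 2 * (∑' n : ℕ, (-1 : ℝ) ^ n / (2 * (n : ℝ) + 1) ^ 2) / π
        - 7 * (∑' n : ℕ, (-1 : ℝ) ^ (n + 1 + 1) / ((n : ℝ) + 1) ^ 3) / (2 * π ^ 2) := by
  have hterm (k : ℕ) :
      dirichletLambda (2 * (k + 1)) / ((2 * ((k : ℝ) + 1) + 2) * 2 ^ (2 * (k + 1)))
        = 4 * (dirichletLambda (2 * (k + 1)) * (1 / 2) ^ (2 * k + 2 + 2)
          / (2 * k + (2 : ℕ) + 2)) := by
    rw [one_div_pow]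
    push_cast
    field_simp
    ring
  have hseries := (hasSum_dirichletLambda_mul_pow_div
    (show |(1 / 2 : ℝ)| < 1 by norm_num [abs_of_pos]) 2).mul_left 4
  have heta : ∑' n : ℕ, (-1 : ℝ) ^ (n + 1 + 1) / ((n : ℝ) + 1) ^ 3 = dirichletEta 3 :=
    tsum_congr fun n => by rw [pow_succ, pow_succ, mul_neg_one, mul_neg_one, neg_neg]
  rw [funext hterm, hseries.tsum_eq, integral_pow_mul_tan_pi_mul_div_two,
    show π * (1 / 2) / 2 = π / 4 by ring, integral_sq_mul_tan, heta, ← dirichletBeta]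
  field_simp
  ring
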